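/- Under the one-coin Dawid–Skene model with random true labels (prior π ∈ (0,1), accuracies w_i ∈ (0,1) not all equal to 1/2, sampling probabilities q_ij ∈ [0,1]), the oracle MAP rule ŷ_j = +1 if ρ_j > 1/2 and ŷ_j = −1 otherwise, where ρ_j = P(y_j = +1 | Z_1j, …, Z_Mj), satisfies the hyperplane-rule mean error rate bound: with v_i^{ora} = ln(w_i/(1 − w_i)), a^{ora} = ln(π/(1 − π)) and t1^{ora} = min_{1≤j≤N} (Σ_{i=1}^M q_ij v_i^{ora}(2w_i − 1) − |a^{ora}|)/‖v^{ora}‖₂, if t1^{ora} ≥ 0 then E[errRate] ≤ exp(−(t1^{ora})²/2). -/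

import Mathlib

open MeasureTheory ProbabilityTheory

/-!
The MAP rule minimises, task by task, the probability of error among all rules that depend only
on the labels `Z_1j, …, Z_Mj` (`map_error_le`). It is therefore enough to bound the error of one
convenient competitor, the unbiased weighted vote `sign (∑ i, v_i Z_ij)` with the oracle weights.
Its error event forces `y_j ∑ i, v_i Z_ij ≤ 0`. Conditionally on `y_j`, the terms
`v_i y_j Z_ij` are independent, lie in `[-|v_i|, |v_i|]` and have mean `q_ij v_i (2 w_i - 1)`, so
with `S = ∑ i, q_ij v_i (2 w_i - 1)` Hoeffding's lemma and the Chernoff bound at parameter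
`S / ‖v‖²` (`three_point_mgf_le`, `class_error_le`) give the bound `exp (-S² / (2 ‖v‖²))`.
Since `0 ≤ t1ora ≤ (S - |aora|) / ‖v‖ ≤ S / ‖v‖`, this is at most `exp (-t1ora² / 2)`; averaging
over the tasks finishes the proof.
-/

/-- Hoeffding's lemma for the law on `{1, -1}` giving mass `p` to `1`, written out explicitly. -/
theorem two_point_mgf_le {p : ℝ} (hp : p ∈ Set.Icc (0:ℝ) 1) (x : ℝ) :
    p * Real.exp x + (1 - p) * Real.exp (-x) ≤ Real.exp ((2 * p - 1) * x + x ^ 2 / 2) := by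
  obtain ⟨h0, h1⟩ := hp
  have h1' : 0 ≤ 1 - p := by linarith
  let ν : Measure ℝ := ENNReal.ofReal p • Measure.dirac 1 +
    ENNReal.ofReal (1 - p) • Measure.dirac (-1)
  have hν : IsProbabilityMeasure ν := ⟨by
    simp [ν, ← ENNReal.ofReal_add h0 h1']⟩
  have hint : ∀ f : ℝ → ℝ, ∫ z, f z ∂ν = p * f 1 + (1 - p) * f (-1) := by
    intro f
    have hd : ∀ a : ℝ, ∀ c : ℝ, Integrable f (ENNReal.ofReal c • Measure.dirac a) := fun a c =>
      (integrable_dirac (by simp [enorm_lt_top])).smul_measure ENNReal.ofReal_ne_top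
    rw [integral_add_measure (hd _ _) (hd _ _), integral_smul_measure, integral_smul_measure,
      integral_dirac, integral_dirac, ENNReal.toReal_ofReal h0, ENNReal.toReal_ofReal h1']
    simp
  have hb : ∀ᵐ z ∂ν, z ∈ Set.Icc (-1 : ℝ) 1 := by
    refine ae_add_measure_iff.2 ⟨?_, ?_⟩ <;>
    · refine Measure.ae_smul_measure ?_ _
      rw [ae_dirac_eq]
      simp
  have hsub := hasSubgaussianMGF_of_mem_Icc (μ := ν) (X := id) aemeasurable_id hb
  have h := hsub.mgf_le x
  rw [mgf, hint, hint] at h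
  have e1 : p * Real.exp (x * (id 1 - (p * id 1 + (1 - p) * id (-1))))
      + (1 - p) * Real.exp (x * (id (-1) - (p * id 1 + (1 - p) * id (-1))))
      = (p * Real.exp x + (1 - p) * Real.exp (-x)) * Real.exp (-((2 * p - 1) * x)) := by
    simp only [id]
    rw [add_mul, mul_assoc, mul_assoc, ← Real.exp_add, ← Real.exp_add]
    ring_nf
  rw [e1, Real.exp_neg ((2 * p - 1) * x), mul_inv_le_iff₀ (Real.exp_pos _), ← Real.exp_add] at h
  refine h.trans_eq ?_
  congr 1
  norm_num
  ring

/-- Hoeffding's lemma for one worker's agreement `y * Z`, which is `1`, `-1`, `0` with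
probabilities `q w`, `q (1 - w)`, `1 - q`. By `1 ≤ cosh x`, splitting the mass at `0` evenly
between `±1` only increases the left-hand side and keeps the mean, which reduces the claim to
the two-point law. -/
theorem three_point_mgf_le {q w : ℝ} (hq : q ∈ Set.Icc (0:ℝ) 1) (hw : w ∈ Set.Ioo (0:ℝ) 1)
    (x : ℝ) :
    q * w * Real.exp (-x) + q * (1 - w) * Real.exp x + (1 - q) ≤
      Real.exp (-(q * (2 * w - 1) * x) + x ^ 2 / 2) := by
  have hp : q * (1 - w) + (1 - q) / 2 ∈ Set.Icc (0:ℝ) 1 := by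
    obtain ⟨⟨a, b⟩, c, d⟩ := And.intro hq hw
    constructor <;> nlinarith [mul_nonneg a c.le]
  have h := two_point_mgf_le hp x
  have hc : 2 ≤ Real.exp x + Real.exp (-x) := by
    have := Real.one_le_cosh x
    rw [Real.cosh_eq] at this
    linarith
  have e : (2 * (q * (1 - w) + (1 - q) / 2) - 1) * x + x ^ 2 / 2
      = -(q * (2 * w - 1) * x) + x ^ 2 / 2 := by ring
  rw [e] at h
  refine le_trans ?_ h
  nlinarith [hq.2]

/-- Bayes optimality: thresholding the conditional probability of `E` given `m` at `1/2` has
error at most that of any other `m`-measurable guess `B` for `E`. The error of a guess `A` is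
`μ E + ∫ (1 - 2ρ)` over `A`, which is minimal when `A` is the set where the integrand is negative. -/
theorem map_error_le {Ω : Type*} {m m0 : MeasurableSpace Ω} (μ : Measure Ω)
    [IsProbabilityMeasure μ] (hm : m ≤ m0) {E B : Set Ω} (hE : MeasurableSet E)
    (hB : MeasurableSet[m] B) :
    μ.real {ω | ¬ (1 / 2 < (μ[E.indicator (fun _ => (1:ℝ)) | m]) ω ↔ ω ∈ E)} ≤
      μ.real (B ∩ Eᶜ) + μ.real (Bᶜ ∩ E) := by
  set ρ := μ[E.indicator (fun _ => (1:ℝ)) | m] with hρ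
  have hρm : Measurable[m] ρ := stronglyMeasurable_condExp.measurable
  have hρi : Integrable ρ μ := integrable_condExp
  have hg : Integrable (fun ω => 1 - 2 * ρ ω) μ := (integrable_const _).sub (hρi.const_mul 2)
  have key : ∀ A, MeasurableSet[m] A →
      μ.real (A ∩ Eᶜ) + μ.real (Aᶜ ∩ E) = μ.real E + ∫ ω in A, (1 - 2 * ρ ω) ∂μ := by
    intro A hA
    have h1 : ∫ ω in A, ρ ω ∂μ = μ.real (A ∩ E) := by
      rw [hρ, setIntegral_condExp hm ((integrable_const _).indicator hE) hA,
        setIntegral_indicator hE]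
      simp
    have h2 : ∫ ω in A, (1 - 2 * ρ ω) ∂μ = μ.real A - 2 * μ.real (A ∩ E) := by
      rw [integral_sub (integrable_const _) (hρi.const_mul 2).integrableOn, integral_const_mul, h1]
      simp
    have h3 : μ.real (A ∩ E) + μ.real (A ∩ Eᶜ) = μ.real A := by
      rw [← Set.sdiff_eq]; exact measureReal_inter_add_sdiff hE
    have h4 : μ.real (A ∩ E) + μ.real (Aᶜ ∩ E) = μ.real E := by
      rw [Set.inter_comm A, Set.inter_comm Aᶜ, ← Set.sdiff_eq]
      exact measureReal_inter_add_sdiff (hm _ hA)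
    linarith
  have hA : MeasurableSet[m] {ω | 1 / 2 < ρ ω} := measurableSet_lt measurable_const hρm
  have hsub : {ω | ¬ (1 / 2 < ρ ω ↔ ω ∈ E)} ⊆
      ({ω | 1 / 2 < ρ ω} ∩ Eᶜ) ∪ ({ω | 1 / 2 < ρ ω}ᶜ ∩ E) := by
    intro ω h
    simp only [Set.mem_ofPred_eq, Set.mem_union, Set.mem_inter_iff, Set.mem_compl_iff] at h ⊢
    tauto
  refine (measureReal_mono hsub).trans ((measureReal_union_le _ _).trans ?_)
  rw [key _ hA, key _ hB, ← integral_indicator (hm _ hA), ← integral_indicator (hm _ hB)]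
  refine add_le_add_right ?_ _
  refine integral_mono (hg.indicator (hm _ hA)) (hg.indicator (hm _ hB)) fun ω => ?_
  classical
  simp only [Set.indicator_apply, Set.mem_ofPred_eq]
  split_ifs <;> linarith

/-- Chernoff bound, at parameter `l`, for the error of the rule `sign (∑ i, v i * Z i)` on the
class `y = s` of prior mass `c`; ties count as errors. The joint law is used only through its
values on the atoms of `(y, Z)`. -/
theorem class_error_le {Ω : Type*} [MeasurableSpace Ω] (μ : Measure Ω) [IsProbabilityMeasure μ]
    {M : ℕ} {q w v : Fin M → ℝ} (hq : ∀ i, q i ∈ Set.Icc (0:ℝ) 1)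
    (hw : ∀ i, w i ∈ Set.Ioo (0:ℝ) 1) {y : Ω → ℝ} {Z : Fin M → Ω → ℝ}
    (hZval : ∀ i ω, Z i ω = 1 ∨ Z i ω = 0 ∨ Z i ω = -1)
    {s c : ℝ} (hs : s = 1 ∨ s = -1) (hc : 0 ≤ c)
    (hjoint : ∀ z : Fin M → ℝ, (∀ i, z i = 1 ∨ z i = 0 ∨ z i = -1) →
      μ {ω | y ω = s ∧ ∀ i, Z i ω = z i} = ENNReal.ofReal (c *
          ∏ i, (if z i = s then q i * w i
                else if z i = -s then q i * (1 - w i) else 1 - q i)))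
    {l : ℝ} (hl : 0 ≤ l) :
    μ.real {ω | y ω = s ∧ s * ∑ i, v i * Z i ω ≤ 0} ≤
      c * Real.exp (-(l * ∑ i, q i * v i * (2 * w i - 1)) + l ^ 2 * (∑ i, v i ^ 2) / 2) := by
  classical
  set P : Fin M → ℝ → ℝ := fun i z => if z = s then q i * w i
                else if z = -s then q i * (1 - w i) else 1 - q i with hP
  have hP0 : ∀ i z, 0 ≤ P i z := by
    intro i z
    obtain ⟨⟨a, b⟩, c, d⟩ := And.intro (hq i) (hw i)
    simp only [hP]
    split_ifs
    · positivity
    · exact mul_nonneg a (by linarith)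
    · linarith
  have hcast : ∀ k : SignType, (k : ℝ) = 1 ∨ (k : ℝ) = 0 ∨ (k : ℝ) = -1 := by
    intro k; cases k <;> simp
  have hatom : ∀ ζ : Fin M → SignType,
      μ.real {ω | y ω = s ∧ ∀ i, Z i ω = (ζ i : ℝ)} = c * ∏ i, P i (ζ i) := by
    intro ζ
    rw [Measure.real, hjoint (fun i => (ζ i : ℝ)) (fun i => hcast _), ENNReal.toReal_ofReal]
    exact mul_nonneg hc (Finset.prod_nonneg fun i _ => hP0 i _)
  -- The label vectors on which the rule errs; `SignType` enumerates the values `1, 0, -1`.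
  set F : Finset (Fin M → SignType) :=
    Finset.univ.filter fun ζ => s * ∑ i, v i * (ζ i : ℝ) ≤ 0 with hF
  have hsub : {ω | y ω = s ∧ s * ∑ i, v i * Z i ω ≤ 0} ⊆
      ⋃ ζ ∈ F, {ω | y ω = s ∧ ∀ i, Z i ω = (ζ i : ℝ)} := by
    rintro ω ⟨h1, h2⟩
    have hz : ∀ i, ((SignType.sign (Z i ω) : SignType) : ℝ) = Z i ω := by
      intro i
      rcases hZval i ω with h | h | h <;> simp [h]
    refine Set.mem_iUnion₂.2 ⟨fun i => SignType.sign (Z i ω), ?_, h1, fun i => (hz i).symm⟩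
    simp only [hF, Finset.mem_filter, Finset.mem_univ, true_and, hz]
    exact h2
  calc μ.real {ω | y ω = s ∧ s * ∑ i, v i * Z i ω ≤ 0}
      ≤ ∑ ζ ∈ F, μ.real {ω | y ω = s ∧ ∀ i, Z i ω = (ζ i : ℝ)} :=
        (measureReal_mono hsub (measure_ne_top _ _)).trans (measureReal_biUnion_finset_le _ _)
    _ = ∑ ζ ∈ F, c * ∏ i, P i (ζ i) := Finset.sum_congr rfl fun ζ _ => hatom ζ
    _ ≤ ∑ ζ ∈ F, c * ∏ i, (P i (ζ i) * Real.exp (-(l * s * (v i * (ζ i : ℝ))))) := by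
        refine Finset.sum_le_sum fun ζ hζ => mul_le_mul_of_nonneg_left ?_ hc
        rw [Finset.prod_mul_distrib, ← Real.exp_sum, Finset.sum_neg_distrib, ← Finset.mul_sum]
        refine le_mul_of_one_le_right (Finset.prod_nonneg fun i _ => hP0 i _)
          (Real.one_le_exp ?_)
        have := (Finset.mem_filter.1 hζ).2
        nlinarith
    _ ≤ ∑ ζ : Fin M → SignType, c * ∏ i, (P i (ζ i) * Real.exp (-(l * s * (v i * (ζ i : ℝ))))) := by
        refine Finset.sum_le_univ_sum_of_nonneg fun ζ => mul_nonneg hc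
          (Finset.prod_nonneg fun i _ => mul_nonneg (hP0 i _) (Real.exp_pos _).le)
    _ = c * ∏ i, ∑ k : SignType, (P i k * Real.exp (-(l * s * (v i * (k : ℝ))))) := by
        rw [Finset.prod_univ_sum, Fintype.piFinset_univ, Finset.mul_sum]
    _ ≤ c * ∏ i, Real.exp (-(q i * (2 * w i - 1) * (l * v i)) + (l * v i) ^ 2 / 2) := by
        refine mul_le_mul_of_nonneg_left (Finset.prod_le_prod
          (fun i _ => Finset.sum_nonneg fun k _ => mul_nonneg (hP0 i _) (Real.exp_pos _).le)
          fun i _ => ?_) hc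
        refine le_trans (le_of_eq ?_) (three_point_mgf_le (hq i) (hw i) (l * v i))
        -- The sum over the label `k` is the moment generating function of a single agreement `s * k`.
        have hu : (Finset.univ : Finset SignType) = {1, 0, -1} := by decide
        rw [hu, Finset.sum_insert (by decide), Finset.sum_insert (by decide), Finset.sum_singleton]
        rcases hs with rfl | rfl <;> norm_num [hP] <;> ring
    _ = _ := by
        rw [← Real.exp_sum, Finset.sum_add_distrib, Finset.sum_neg_distrib, Finset.mul_sum,
          Finset.mul_sum, Finset.sum_div]
        congr 3
        · congr 1
          exact Finset.sum_congr rfl fun i _ => by ring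
        · exact Finset.sum_congr rfl fun i _ => by ring

/-- Under the one-coin Dawid–Skene model with random true labels
(prior `pri ∈ (0,1)`, accuracies `w i ∈ (0,1)` not all equal to `1/2`, sampling
probabilities `q i j ∈ [0,1]`), the oracle MAP rule `ŷ_j = +1` iff `ρ_j > 1/2`, where
`ρ_j = P(y_j = +1 | Z_1j, …, Z_Mj)`, satisfies the hyperplane-rule mean error rate bound:
with `v_i^{ora} = ln(w_i/(1 − w_i))`, `a^{ora} = ln(pri/(1 − pri))` and
`t1^{ora} = min_j (Σ_i q_ij v_i^{ora}(2w_i − 1) − |a^{ora}|)/‖v^{ora}‖₂`, if `t1^{ora} ≥ 0`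
then `E[errRate] ≤ exp(−(t1^{ora})²/2)`. -/
theorem oracle_map_mean_error_rate_bound
    {Ω : Type*} [MeasurableSpace Ω] (μ : Measure Ω) [IsProbabilityMeasure μ]
    (M N : ℕ) [NeZero M] [NeZero N]
    (pri : ℝ) (hpri : pri ∈ Set.Ioo (0:ℝ) 1)
    (q : Fin M → Fin N → ℝ) (hq : ∀ i j, q i j ∈ Set.Icc (0:ℝ) 1)
    (w : Fin M → ℝ) (hw : ∀ i, w i ∈ Set.Ioo (0:ℝ) 1)
    (y : Fin N → Ω → ℝ)
    (hymeas : ∀ j, Measurable (y j))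
    (hyval : ∀ j ω, y j ω = 1 ∨ y j ω = -1)
    (Z : Fin M → Fin N → Ω → ℝ)
    (hZmeas : ∀ i j, Measurable (Z i j))
    (hZval : ∀ i j ω, Z i j ω = 1 ∨ Z i j ω = 0 ∨ Z i j ω = -1)
    (hjoint : ∀ j, ∀ s : ℝ, (s = 1 ∨ s = -1) → ∀ z : Fin M → ℝ,
      (∀ i, z i = 1 ∨ z i = 0 ∨ z i = -1) →
      μ {ω | y j ω = s ∧ ∀ i, Z i j ω = z i} =
        ENNReal.ofReal ((if s = 1 then pri else 1 - pri) *
          ∏ i, (if z i = s then q i j * w i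
                else if z i = -s then q i j * (1 - w i) else 1 - q i j)))
    (ρ : Fin N → Ω → ℝ)
    (hρ : ∀ j, ρ j = μ[Set.indicator {ω | y j ω = 1} (fun _ => (1:ℝ)) |
        MeasurableSpace.comap (fun ω (i : Fin M) => Z i j ω) inferInstance])
    (hwne : ∃ i, w i ≠ 1 / 2)
    (vora : Fin M → ℝ) (hvora : ∀ i, vora i = Real.log (w i / (1 - w i)))
    (aora : ℝ) (haora : aora = Real.log (pri / (1 - pri)))
    (t1ora : ℝ)
    (ht1ora : t1ora = ⨅ j : Fin N,
      ((∑ i, q i j * vora i * (2 * w i - 1)) - |aora|) / Real.sqrt (∑ i, (vora i)^2))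
    (yhat : Fin N → Ω → ℝ)
    (hyhat : ∀ j ω, yhat j ω = if 1 / 2 < ρ j ω then 1 else -1)
    (errRate : Ω → ℝ)
    (herr : ∀ ω, errRate ω =
      (1 / (N:ℝ)) * ∑ j, if yhat j ω ≠ y j ω then (1:ℝ) else 0)
    (ht1nn : 0 ≤ t1ora) :
    ∫ ω, errRate ω ∂μ ≤ Real.exp (-(t1ora^2) / 2) := by
  have hv : 0 < ∑ i, vora i ^ 2 := by
    obtain ⟨i, hi⟩ := hwne
    refine Finset.sum_pos' (fun i _ => sq_nonneg _) ⟨i, Finset.mem_univ _, ?_⟩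
    obtain ⟨h0, h1⟩ := hw i
    have h1' : 0 < 1 - w i := by linarith
    have hne : vora i ≠ 0 := by
      rw [hvora]
      refine Real.log_ne_zero_of_pos_of_ne_one (by positivity) fun h => hi ?_
      rw [div_eq_one_iff_eq h1'.ne'] at h
      linarith
    positivity
  have hm : ∀ j, MeasurableSpace.comap (fun ω (i : Fin M) => Z i j ω) inferInstance ≤
      (inferInstance : MeasurableSpace Ω) := fun j =>
    (measurable_pi_lambda _ fun i => hZmeas i j).comap_le
  have hρmeas : ∀ j, Measurable (ρ j) := fun j => by
    rw [hρ j]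
    exact (stronglyMeasurable_condExp.mono (hm j)).measurable
  have hyhatmeas : ∀ j, Measurable (yhat j) := fun j => by
    rw [show yhat j = fun ω => if 1 / 2 < ρ j ω then 1 else -1 from funext (hyhat j)]
    exact Measurable.ite (measurableSet_lt measurable_const (hρmeas j)) measurable_const
      measurable_const
  have herrmeas : ∀ j, MeasurableSet {ω | yhat j ω ≠ y j ω} := fun j =>
    (measurableSet_eq_fun (hyhatmeas j) (hymeas j)).compl
  have htask : ∀ j, μ.real {ω | yhat j ω ≠ y j ω} ≤ Real.exp (-(t1ora ^ 2) / 2) := by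
    intro j
    set S := ∑ i, q i j * vora i * (2 * w i - 1) with hS
    set V := ∑ i, vora i ^ 2 with hV
    have hle : t1ora ≤ (S - |aora|) / Real.sqrt V := by
      rw [ht1ora]
      exact ciInf_le (Set.finite_range _).bddBelow j
    have hsq : 0 < Real.sqrt V := Real.sqrt_pos.2 hv
    have hle' : t1ora * Real.sqrt V ≤ S := by
      rw [le_div_iff₀ hsq] at hle
      linarith [abs_nonneg aora]
    have hS0 : 0 ≤ S := le_trans (by positivity) hle'
    have ht : t1ora ^ 2 * V ≤ S ^ 2 := by
      have := pow_le_pow_left₀ (by positivity) hle' 2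
      rwa [mul_pow, Real.sq_sqrt hv.le] at this
    have hE : MeasurableSet {ω | y j ω = 1} := hymeas j (measurableSet_singleton 1)
    have hB : MeasurableSet[MeasurableSpace.comap (fun ω (i : Fin M) => Z i j ω) inferInstance]
        {ω | 0 < ∑ i, vora i * Z i j ω} := by
      refine ⟨{z : Fin M → ℝ | 0 < ∑ i, vora i * z i}, ?_, rfl⟩
      exact measurableSet_lt measurable_const (by fun_prop)
    have hbayes := map_error_le μ (hm j) hE hB
    rw [← hρ j] at hbayes
    have hl : 0 ≤ S / V := by positivity
    have hpos := class_error_le μ (v := vora) (fun i => hq i j) hw (fun i => hZval i j)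
      (Or.inl rfl) hpri.1.le (fun z hz => by simpa using hjoint j 1 (Or.inl rfl) z hz) hl
    have hneg := class_error_le μ (v := vora) (c := 1 - pri) (fun i => hq i j) hw
      (fun i => hZval i j) (Or.inr rfl) (by linarith [hpri.2])
      (fun z hz => by
        have := hjoint j (-1) (Or.inr rfl) z hz
        rwa [if_neg (show ¬ ((-1 : ℝ) = 1) by norm_num)] at this) hl
    rw [← hS, ← hV] at hpos hneg
    -- `S / V` minimises the Chernoff exponent `-l S + l² V / 2`.
    have hexp : -(S / V * S) + (S / V) ^ 2 * V / 2 = -(S ^ 2 / V) / 2 := by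
      field_simp
      ring
    rw [hexp] at hpos hneg
    have h1 : μ.real {ω | yhat j ω ≠ y j ω} ≤
        μ.real {ω | ¬ (1 / 2 < ρ j ω ↔ ω ∈ {ω | y j ω = 1})} := by
      refine measureReal_mono fun ω (h : yhat j ω ≠ y j ω) => ?_
      change ¬ (1 / 2 < ρ j ω ↔ y j ω = 1)
      rw [hyhat] at h
      rcases hyval j ω with e | e <;> rw [e] at h ⊢ <;> split_ifs at h with hc <;> norm_num at *
        <;> assumption
    have h2 : μ.real ({ω | 0 < ∑ i, vora i * Z i j ω} ∩ {ω | y j ω = 1}ᶜ) ≤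
        μ.real {ω | y j ω = -1 ∧ -1 * ∑ i, vora i * Z i j ω ≤ 0} := by
      refine measureReal_mono fun ω h => ?_
      have ha : 0 < ∑ i, vora i * Z i j ω := h.1
      exact ⟨(hyval j ω).resolve_left h.2, by linarith⟩
    have h3 : μ.real ({ω | 0 < ∑ i, vora i * Z i j ω}ᶜ ∩ {ω | y j ω = 1}) ≤
        μ.real {ω | y j ω = 1 ∧ 1 * ∑ i, vora i * Z i j ω ≤ 0} := by
      refine measureReal_mono fun ω h => ?_
      have ha : ¬ 0 < ∑ i, vora i * Z i j ω := h.1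
      exact ⟨h.2, by linarith⟩
    have h4 : Real.exp (-(S ^ 2 / V) / 2) ≤ Real.exp (-(t1ora ^ 2) / 2) := by
      have := (le_div_iff₀ hv).2 ht
      exact Real.exp_le_exp.2 (by linarith)
    linarith
  have hind : ∀ j, (fun ω => if yhat j ω ≠ y j ω then (1:ℝ) else 0) =
      Set.indicator {ω | yhat j ω ≠ y j ω} (fun _ => (1:ℝ)) := fun j => by
    ext ω
    simp [Set.indicator_apply]
  have hN : (0:ℝ) < N := Nat.cast_pos.2 (NeZero.pos N)
  calc ∫ ω, errRate ω ∂μ = (1 / (N:ℝ)) * ∑ j, μ.real {ω | yhat j ω ≠ y j ω} := by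
        simp_rw [herr]
        rw [integral_const_mul, integral_finsetSum]
        · congr 1
          refine Finset.sum_congr rfl fun j _ => ?_
          rw [hind, integral_indicator (herrmeas j)]
          simp
        · intro j _
          rw [hind]
          exact (integrable_const _).indicator (herrmeas j)
    _ ≤ (1 / (N:ℝ)) * ∑ _j : Fin N, Real.exp (-(t1ora ^ 2) / 2) := by
        gcongr with j
        exact htask j
    _ = Real.exp (-(t1ora ^ 2) / 2) := by
        simp only [Finset.sum_const, Finset.card_univ, Fintype.card_fin, nsmul_eq_mul]
        field_simp
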